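/- arXiv:0906.2450 — 2 statements merged into one kernel-verified Lean document; each statement's English description precedes it below -/
import Mathlib

section
/- For every nonnegative integer n, there exist integers x, y, z, each relatively prime to 6, such that 24n + 13 = x² + 3y² + 9z². -/
/-- Integral ternary forms of determinant `3` (positive definite) with first coefficient `a`
and first `2 × 2` minor `A`, representing `N`. -/
def TernRep (N a A : ℤ) : Prop :=
  ∃ b c d e f x y z : ℤ, 0 < a ∧ 0 < A ∧ A = a * c - b ^ 2 ∧
    a * c * f + 2 * b * d * e - a * e ^ 2 - c * d ^ 2 - f * b ^ 2 = 3 ∧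
    a * x ^ 2 + 2 * b * x * y + c * y ^ 2 + 2 * d * x * z + 2 * e * y * z + f * z ^ 2 = N

/-- Existence of nearest integers. -/
lemma exists_near (a b : ℤ) (ha : 0 < a) : ∃ k : ℤ, 4 * (a * k + b) ^ 2 ≤ a ^ 2 := by
  have h1 := Int.emod_nonneg b ha.ne'
  have h2 := Int.emod_lt_of_pos b ha
  have h3 := Int.emod_add_mul_ediv b a
  by_cases h : 2 * (b % a) ≤ a
  · refine ⟨-(b / a), ?_⟩
    have : a * -(b / a) + b = b % a := by linarith
    rw [this]; nlinarith
  · refine ⟨-(b / a) - 1, ?_⟩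
    have : a * (-(b / a) - 1) + b = b % a - a := by linarith
    rw [this]; nlinarith

lemma exists_min (P : ℤ → Prop) (hpos : ∀ a, P a → 0 < a) (h : ∃ a, P a) :
    ∃ a, P a ∧ ∀ a', P a' → a ≤ a' := by
  obtain ⟨a, ha, hm⟩ := Int.exists_least_of_bdd (P := P) ⟨0, fun z hz => (hpos z hz).le⟩ h
  exact ⟨a, ha, hm⟩

lemma reduce (N a0 A0 : ℤ) (hN : N % 8 = 5) (h0 : TernRep N a0 A0) :
    ∃ x y z : ℤ, N = x ^ 2 + y ^ 2 + 3 * z ^ 2 := by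
  obtain ⟨a, ⟨A', hA'⟩, hmin⟩ := exists_min (fun a => ∃ A, TernRep N a A)
    (by rintro a ⟨A, b, c, d, e, f, x, y, z, h, -⟩; exact h) ⟨a0, A0, h0⟩
  obtain ⟨A, hA, hminA⟩ := exists_min (fun A => TernRep N a A)
    (by rintro A ⟨b, c, d, e, f, x, y, z, -, h, -⟩; exact h) ⟨A', hA'⟩
  obtain ⟨b, c, d, e, f, x, y, z, ha, hApos, hAe, hdet, hrep⟩ := hA
  have key1 : 3 * a ^ 2 ≤ 4 * A := by
    obtain ⟨k, hk⟩ := exists_near a b ha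
    have hid : a * (c + 2 * b * k + a * k ^ 2) = (a * k + b) ^ 2 + A := by rw [hAe]; ring
    have hp : 0 < c + 2 * b * k + a * k ^ 2 := by
      by_contra hcon
      nlinarith [sq_nonneg (a * k + b)]
    have := hmin (c + 2 * b * k + a * k ^ 2)
      ⟨A, b + a * k, a, e + k * d, d, f, y, x - k * y, z, hp, hApos, by rw [hAe]; ring,
        by rw [← hdet]; ring, by rw [← hrep]; ring⟩
    nlinarith
  set B := a * e - b * d with hB
  set C := a * f - d ^ 2 with hC
  have hABC : A * C - B ^ 2 = 3 * a := by rw [hAe, hB, hC, ← hdet]; ring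
  have key2 : A ^ 2 ≤ 4 * a := by
    obtain ⟨k, hk⟩ := exists_near A B hApos
    have hid : A * (C + 2 * B * k + A * k ^ 2) = (A * k + B) ^ 2 + 3 * a := by rw [← hABC]; ring
    have hp : 0 < C + 2 * B * k + A * k ^ 2 := by
      by_contra hcon
      nlinarith [sq_nonneg (A * k + B)]
    have := hminA (C + 2 * B * k + A * k ^ 2)
      ⟨d + k * b, f + 2 * e * k + c * k ^ 2, b, e + k * c, c, x, z, y - k * z, ha, hp,
        by rw [hAe, hB, hC]; ring, by rw [← hdet]; ring, by rw [← hrep]; ring⟩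
    nlinarith
  have hA4 : A < 4 := by
    by_contra hcon
    have : 4 * a ≤ A * a := by nlinarith
    nlinarith
  have ha1 : a = 1 := by
    have : a < 3 := by nlinarith
    interval_cases A <;> interval_cases a <;> omega
  have hN' : A * N = A * (x + b * y + d * z) ^ 2 + (A * y + B * z) ^ 2 + 3 * z ^ 2 := by
    have h3 : 3 * z ^ 2 = (A * C - B ^ 2) * z ^ 2 := by rw [hABC, ha1]; ring
    rw [h3, ← hrep, hAe, hB, hC, ha1]; ring
  have hA3 : A = 1 ∨ A = 2 := by
    rw [ha1] at key1 key2
    have : A < 3 := by nlinarith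
    omega
  rcases hA3 with rfl | rfl
  · exact ⟨x + b * y + d * z, 1 * y + B * z, z, by linarith⟩
  · exfalso
    have hBodd : B % 2 = 1 := by
      rcases Int.emod_two_eq_zero_or_one B with h | h
      · exfalso
        obtain ⟨t, ht⟩ : ∃ t, B = 2 * t := ⟨B / 2, by omega⟩
        rw [ht, ha1] at hABC
        have : (2 * t) ^ 2 = 2 * (2 * t ^ 2) := by ring
        omega
      · exact h
    obtain ⟨t, ht⟩ : ∃ t, B = 2 * t + 1 := ⟨B / 2, by omega⟩
    obtain ⟨w, hw⟩ : ∃ w, 2 * y + B * z = 2 * w + z := ⟨y + t * z, by rw [ht]; ring⟩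
    rw [hw] at hN'
    generalize x + b * y + d * z = X at hN'
    have h4 : N = X ^ 2 + 2 * (w ^ 2 + w * z + z ^ 2) := by linarith
    have hX : X % 8 = 0 ∨ X % 8 = 1 ∨ X % 8 = 2 ∨ X % 8 = 3 ∨ X % 8 = 4 ∨ X % 8 = 5 ∨ X % 8 = 6
      ∨ X % 8 = 7 := by omega
    have hX2 : X ^ 2 % 8 = 0 ∨ X ^ 2 % 8 = 1 ∨ X ^ 2 % 8 = 4 := by
      rcases hX with h | h | h | h | h | h | h | h <;> simp [pow_two, Int.mul_emod, h]
    have hm : (w ^ 2 + w * z + z ^ 2) % 4 ≠ 2 := by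
      have hw4 : w % 4 = 0 ∨ w % 4 = 1 ∨ w % 4 = 2 ∨ w % 4 = 3 := by omega
      have hz4 : z % 4 = 0 ∨ z % 4 = 1 ∨ z % 4 = 2 ∨ z % 4 = 3 := by omega
      rcases hw4 with h | h | h | h <;> rcases hz4 with h' | h' | h' | h' <;>
        simp [pow_two, Int.add_emod, Int.mul_emod, h, h']
    omega

open NumberTheorySymbols in
lemma exists_form (n : ℕ) : ∃ a A, TernRep (24 * (n : ℤ) + 13) a A := by
  have hcop : IsCoprime (96 * (n : ℤ) + 49) ((12 * (24 * n + 13) : ℕ) : ℤ) := by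
    refine ⟨9 * (32 * (n : ℤ) + 16) ^ 2 - 3 * (32 * n + 16) + 1 + 9 * (32 * (n : ℤ) + 16) ^ 3,
      -3 * (32 * (n : ℤ) + 16) ^ 3, ?_⟩
    push_cast; ring
  obtain ⟨p, hpgt, hp, hmod⟩ :=
    Nat.forall_exists_prime_gt_and_zmodEq (96 * n + 49) (by omega) hcop
  haveI : Fact p.Prime := ⟨hp⟩
  obtain ⟨k, hk⟩ := hmod.symm.dvd
  push_cast at hk
  have hkpos : 0 ≤ k := by
    by_contra hcon
    have h1 : (p : ℤ) > 96 * n + 49 := by exact_mod_cast hpgt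
    nlinarith
  set D : ℤ := 12 * k + 4 with hD
  have hpD : (p : ℤ) = (24 * (n : ℤ) + 13) * D - 3 := by rw [hD]; linarith
  have hp12 : p % 12 = 1 := by
    have : (p : ℤ) = 12 * (8 * n + 4 + (24 * n + 13) * k) + 1 := by linarith
    omega
  have hpodd : Odd p := Nat.odd_iff.2 (by omega)
  -- `-3` is a residue for any modulus congruent to 1 mod 12
  have h3 : ∀ m : ℕ, m % 12 = 1 → J(-3 | m) = 1 := by
    intro m hm
    have hmo : Odd m := Nat.odd_iff.2 (by omega)
    rw [jacobiSym.neg _ hmo, ZMod.χ₄_nat_one_mod_four (by omega), one_mul]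
    have := jacobiSym.quadratic_reciprocity_one_mod_four' (a := 3) (b := m) (by decide) (by omega)
    push_cast at this
    rw [this, jacobiSym.mod_left]
    have : (m : ℤ) % (3 : ℕ) = 1 := by push_cast; omega
    rw [this, jacobiSym.one_left]
  have hNp : J(((24 * n + 13 : ℕ) : ℤ) | p) = 1 := by
    rw [jacobiSym.quadratic_reciprocity_one_mod_four (by omega) hpodd,
      jacobiSym.mod_left' (a₂ := -3), h3 _ (by omega)]
    rw [hpD]
    apply Int.emod_emod_of_dvd _ (dvd_refl _) |>.symm.trans
    rw [Int.emod_emod_of_dvd _ (dvd_refl _)]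
    apply Int.ModEq.symm
    rw [Int.modEq_iff_dvd]
    exact ⟨D, by push_cast; ring⟩
  have hDp : J(-D | p) = 1 := by
    have h1 : J(-D * ((24 * n + 13 : ℕ) : ℤ) | p) = 1 := by
      rw [← h3 p hp12]
      apply jacobiSym.mod_left'
      apply Int.ModEq.symm
      apply Int.modEq_iff_dvd.2
      exact ⟨-1, by rw [hpD]; push_cast; ring⟩
    rwa [jacobiSym.mul_left, hNp, mul_one] at h1
  obtain ⟨r, hr⟩ := ZMod.isSquare_of_jacobiSym_eq_one hDp
  obtain ⟨s, rfl⟩ := ZMod.intCast_surjective r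
  have hdvd : (p : ℤ) ∣ D + s ^ 2 := by
    rw [← ZMod.intCast_zmod_eq_zero_iff_dvd] 
    push_cast
    push_cast at hr
    rw [pow_two, ← hr]; ring
  obtain ⟨a, ha⟩ := hdvd
  have hp0 : (0 : ℤ) < p := by exact_mod_cast hp.pos
  refine ⟨a, D, s, p, 1, 0, 24 * n + 13, 0, 0, 1, ?_, by omega, by linarith, ?_, by ring⟩
  · by_contra hcon
    nlinarith [sq_nonneg s]
  · have : a * p - s ^ 2 = D := by linarith
    linear_combination (24 * (n : ℤ) + 13) * this - hpD

lemma sq_mod8 (x : ℤ) : (x % 2 = 1 ∧ x ^ 2 % 8 = 1) ∨ (x % 4 = 2 ∧ x ^ 2 % 8 = 4) ∨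
    (x % 4 = 0 ∧ x ^ 2 % 8 = 0) := by
  have hX : x % 8 = 0 ∨ x % 8 = 1 ∨ x % 8 = 2 ∨ x % 8 = 3 ∨ x % 8 = 4 ∨ x % 8 = 5 ∨ x % 8 = 6
      ∨ x % 8 = 7 := by omega
  rcases hX with h | h | h | h | h | h | h | h <;> simp [pow_two, Int.mul_emod, h] <;> omega

lemma sq_mod3 (x : ℤ) : (x % 3 = 0 ∧ x ^ 2 % 3 = 0) ∨ (x % 3 ≠ 0 ∧ x ^ 2 % 3 = 1) := by
  have hX : x % 3 = 0 ∨ x % 3 = 1 ∨ x % 3 = 2 := by omega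
  rcases hX with h | h | h <;> simp [pow_two, Int.mul_emod, h]

lemma rot_parity (x y : ℤ) (h : (x ^ 2 + 3 * y ^ 2) % 8 = 4) :
    ∃ x' y' : ℤ, x' % 2 = 1 ∧ y' % 2 = 1 ∧ x' ^ 2 + 3 * y' ^ 2 = x ^ 2 + 3 * y ^ 2 := by
  by_cases hx : x % 2 = 1
  · refine ⟨x, y, hx, ?_, rfl⟩
    have := sq_mod8 x
    have := sq_mod8 y
    omega
  · have h1 := sq_mod8 x
    have h2 := sq_mod8 y
    obtain ⟨a, rfl⟩ : ∃ a, x = 2 * a := ⟨x / 2, by omega⟩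
    obtain ⟨b, rfl⟩ : ∃ b, y = 2 * b := ⟨y / 2, by omega⟩
    exact ⟨a + 3 * b, a - b, by omega, by omega, by ring⟩

lemma rot_three (x y : ℤ) (hx : x % 2 = 1) (hy : y % 2 = 1) (h3 : x % 3 ≠ 0) :
    ∃ x' y' : ℤ, x' % 2 = 1 ∧ y' % 2 = 1 ∧ x' % 3 ≠ 0 ∧ y' % 3 ≠ 0 ∧
      x' ^ 2 + 3 * y' ^ 2 = x ^ 2 + 3 * y ^ 2 := by
  by_cases hy3 : y % 3 = 0
  · by_cases h4 : (x + y) % 4 = 2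
    · obtain ⟨t, ht⟩ : ∃ t, x = 2 * t - y := ⟨(x + y) / 2, by omega⟩
      subst ht
      exact ⟨t - 2 * y, t, by omega, by omega, by omega, by omega, by ring⟩
    · obtain ⟨t, ht⟩ : ∃ t, x = 2 * t + y := ⟨(x - y) / 2, by omega⟩
      subst ht
      exact ⟨t + 2 * y, t, by omega, by omega, by omega, by omega, by ring⟩
  · exact ⟨x, y, hx, hy, h3, hy3, rfl⟩

lemma gcd_six (x : ℤ) (h2 : x % 2 = 1) (h3 : x % 3 ≠ 0) : Int.gcd x 6 = 1 := by
  have : x % 6 = 1 ∨ x % 6 = 5 := by omega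
  rw [← Int.gcd_emod]
  rcases this with h | h <;> rw [h] <;> decide

lemma finish (N x u y : ℤ) (hN : N % 24 = 13) (hu : u % 3 = 0)
    (h : N = x ^ 2 + u ^ 2 + 3 * y ^ 2) :
    ∃ x y z : ℤ, Int.gcd x 6 = 1 ∧ Int.gcd y 6 = 1 ∧ Int.gcd z 6 = 1 ∧
      N = x ^ 2 + 3 * y ^ 2 + 9 * z ^ 2 := by
  obtain ⟨x, u, y, hx, hu2, hy, h⟩ : ∃ x' u' y' : ℤ, x' % 2 = 1 ∧ u' % 2 = 1 ∧ y' % 2 = 1 ∧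
      N = x' ^ 2 + u' ^ 2 + 3 * y' ^ 2 ∧ u' % 3 = 0 := by
    have h1 := sq_mod8 x
    have h2 := sq_mod8 y
    have h3 := sq_mod8 u
    have h4 := sq_mod3 u
    by_cases hu2 : u % 2 = 1
    · obtain ⟨x', y', hx', hy', he⟩ := rot_parity x y (by omega)
      exact ⟨x', u, y', hx', hu2, hy', by linarith, hu⟩
    · obtain ⟨u', y', hu', hy', he⟩ := rot_parity u y (by omega)
      have h5 := sq_mod3 u'
      exact ⟨x, u', y', by omega, hu', hy', by linarith, by omega⟩
  obtain ⟨h, hu3⟩ := h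
  obtain ⟨z, rfl⟩ : ∃ z, u = 3 * z := ⟨u / 3, by omega⟩
  have hx3 : x % 3 ≠ 0 := by
    have := sq_mod3 x
    have : (3 * z) ^ 2 = 3 * (3 * z ^ 2) := by ring
    omega
  obtain ⟨x', y', a1, a2, a3, a4, a5⟩ := rot_three x y hx hy hx3
  obtain ⟨y'', z', b1, b2, b3, b4, b5⟩ := rot_three y' z a2 (by omega) a4
  exact ⟨x', y'', z', gcd_six _ a1 a3, gcd_six _ b1 b3, gcd_six _ b2 b4, by linarith⟩

theorem rep_24n_add_thirteen (n : ℕ) :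
    ∃ x y z : ℤ, Int.gcd x 6 = 1 ∧ Int.gcd y 6 = 1 ∧ Int.gcd z 6 = 1 ∧
      24 * (n : ℤ) + 13 = x ^ 2 + 3 * y ^ 2 + 9 * z ^ 2 := by
  obtain ⟨a, A, h⟩ := exists_form n
  obtain ⟨x, u, y, hxy⟩ := reduce _ a A (by omega) h
  have h1 := sq_mod3 x
  have h2 := sq_mod3 u
  by_cases hu : u % 3 = 0
  · exact finish _ x u y (by omega) hu hxy
  · exact finish _ u x y (by omega) (by omega) (by linarith)
end

section
/- For every nonnegative integer n, there exist integers x, y, z with z odd such that 120n + 77 = 5x² + 5y² + 3z². -/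
/-- Positive ternary integer-valued form of half-discriminant 3 representing `N`. -/
def PForm (N a b c r s t : ℤ) : Prop :=
  0 < a ∧ 0 < 4 * a * b - t ^ 2 ∧
  4 * a * b * c + r * s * t - a * r ^ 2 - b * s ^ 2 - c * t ^ 2 = 3 ∧
  ∃ x y z : ℤ, a * x ^ 2 + b * y ^ 2 + c * z ^ 2 + r * y * z + s * x * z + t * x * y = N

lemma balanced (x m : ℤ) (hm : 0 < m) : ∃ k : ℤ, -m ≤ 2 * (x + m * k) ∧ 2 * (x + m * k) ≤ m := by
  refine ⟨-((2 * x + m) / (2 * m)), ?_, ?_⟩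
  · have := Int.mul_ediv_self_le (x := 2 * x + m) (k := 2 * m) (by omega)
    nlinarith
  · have := Int.lt_mul_ediv_self_add (x := 2 * x + m) (k := 2 * m) (by omega)
    nlinarith

lemma PForm.shift_xy {N a b c r s t : ℤ} (h : PForm N a b c r s t) (k : ℤ) :
    PForm N a (b + a * k ^ 2 + t * k) c (r + s * k) s (t + 2 * a * k) := by
  obtain ⟨h1, h2, h3, x, y, z, h4⟩ := h
  refine ⟨h1, ?_, ?_, x - k * y, y, z, ?_⟩
  · linear_combination h2
  · linear_combination h3
  · linear_combination h4

lemma PForm.shift_yz {N a b c r s t : ℤ} (h : PForm N a b c r s t) (k : ℤ) :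
    PForm N a b (c + b * k ^ 2 + r * k) (r + 2 * b * k) (s + t * k) t := by
  obtain ⟨h1, h2, h3, x, y, z, h4⟩ := h
  refine ⟨h1, h2, ?_, x, y - k * z, z, ?_⟩
  · linear_combination h3
  · linear_combination h4

lemma PForm.shift_xz {N a b c r s t : ℤ} (h : PForm N a b c r s t) (k : ℤ) :
    PForm N a b (c + a * k ^ 2 + s * k) (r + t * k) (s + 2 * a * k) t := by
  obtain ⟨h1, h2, h3, x, y, z, h4⟩ := h
  refine ⟨h1, h2, ?_, x - k * z, y, z, ?_⟩
  · linear_combination h3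
  · linear_combination h4

lemma PForm.swap_xy {N a b c r s t : ℤ} (h : PForm N a b c r s t) :
    PForm N b a c s r t := by
  obtain ⟨h1, h2, h3, x, y, z, h4⟩ := h
  refine ⟨?_, ?_, ?_, y, x, z, ?_⟩
  · by_contra hb
    nlinarith [mul_nonneg h1.le (not_lt.mp hb |> neg_nonneg.mpr), sq_nonneg t]
  · linear_combination h2
  · linear_combination h3
  · linear_combination h4

lemma PForm.disc {N a b c r s t : ℤ} (h : PForm N a b c r s t) :
    (4 * a * b - t ^ 2) * (4 * a * c - s ^ 2) = 12 * a + (2 * a * r - s * t) ^ 2 := by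
  obtain ⟨h1, h2, h3, -⟩ := h
  linear_combination 4 * a * h3

lemma PForm.swap_yz {N a b c r s t : ℤ} (h : PForm N a b c r s t) :
    PForm N a c b r t s := by
  have hd := h.disc
  obtain ⟨h1, h2, h3, x, y, z, h4⟩ := h
  refine ⟨h1, ?_, ?_, x, z, y, ?_⟩
  · by_contra hb
    nlinarith [mul_nonneg h2.le (not_lt.mp hb |> neg_nonneg.mpr), sq_nonneg (2 * a * r - s * t)]
  · linear_combination h3
  · linear_combination h4

lemma PForm.reduce {N a b c r s t : ℤ} (h : PForm N a b c r s t) :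
    ∃ u v w : ℤ, N = u ^ 2 + (v ^ 2 + v * w + w ^ 2) := by
  obtain ⟨a, ⟨b, c, r, s, t, h⟩, hmin⟩ := Int.exists_least_of_bdd
    (P := fun a => ∃ b c r s t, PForm N a b c r s t)
    ⟨0, fun a ⟨b, c, r, s, t, h⟩ => h.1.le⟩ ⟨a, b, c, r, s, t, h⟩
  obtain ⟨A, ⟨b, c, r, s, t, h, hA⟩, hminA⟩ := Int.exists_least_of_bdd
    (P := fun A => ∃ b c r s t, PForm N a b c r s t ∧ 4 * a * b - t ^ 2 = A)
    ⟨0, fun A ⟨b, c, r, s, t, h, hA⟩ => hA ▸ h.2.1.le⟩ ⟨_, b, c, r, s, t, h, rfl⟩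
  have ha := h.1
  have hApos : 0 < A := hA ▸ h.2.1
  -- normalise t
  obtain ⟨b, c, r, s, t, h, hA, ht1, ht2⟩ : ∃ b c r s t, PForm N a b c r s t ∧
      4 * a * b - t ^ 2 = A ∧ -a ≤ t ∧ t ≤ a := by
    obtain ⟨k, hk1, hk2⟩ := balanced t (2 * a) (by omega)
    exact ⟨_, _, _, _, _, h.shift_xy k, by linear_combination hA, by linarith, by linarith⟩
  obtain ⟨c, r, s, h, hB1, hB2⟩ : ∃ c r s, PForm N a b c r s t ∧
      -A ≤ 2 * (2 * a * r - s * t) ∧ 2 * (2 * a * r - s * t) ≤ A := by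
    obtain ⟨k, hk1, hk2⟩ := balanced (2 * a * r - s * t) A hApos
    have e : 2 * a * (r + 2 * b * k) - (s + t * k) * t = 2 * a * r - s * t + A * k := by
      linear_combination k * hA
    exact ⟨_, _, _, h.shift_yz k, by rw [e]; exact hk1, by rw [e]; exact hk2⟩
  obtain ⟨c, r, s, h, hB1, hB2, hs1, hs2⟩ : ∃ c r s, PForm N a b c r s t ∧
      -A ≤ 2 * (2 * a * r - s * t) ∧ 2 * (2 * a * r - s * t) ≤ A ∧ -a ≤ s ∧ s ≤ a := by
    obtain ⟨k, hk1, hk2⟩ := balanced s (2 * a) (by omega)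
    have e : 2 * a * (r + t * k) - (s + 2 * a * k) * t = 2 * a * r - s * t := by ring
    exact ⟨_, _, _, h.shift_xz k, by rw [e]; exact hB1, by rw [e]; exact hB2,
      by linarith, by linarith⟩
  have hab : a ≤ b := hmin _ ⟨_, _, _, _, _, h.swap_xy⟩
  have hAC : A ≤ 4 * a * c - s ^ 2 := hminA _ ⟨_, _, _, _, _, h.swap_yz, rfl⟩
  have hd := h.disc
  rw [hA] at hd
  have hA16 : A ^ 2 ≤ 16 * a := by nlinarith
  have h3 : 3 * a ^ 2 ≤ A := by nlinarith
  have ha1 : a = 1 := by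
    by_contra hne
    have h2 : 2 ≤ a := by omega
    have h5 : (3 * a ^ 2) ^ 2 ≤ A ^ 2 := by gcongr
    have h6 : 8 ≤ a ^ 3 := by nlinarith [sq_nonneg a]
    nlinarith
  subst ha1
  obtain ⟨-, -, -, x, y, z, h4⟩ := h
  have hA4 : A ≤ 4 := by nlinarith
  have hA3 : 3 ≤ A := by linarith
  have hb : b = 1 := by
    have : t ^ 2 ≤ 1 := by nlinarith
    omega
  subst hb
  have ht : t = -1 ∨ t = 0 ∨ t = 1 := by omega
  have hs : s = -1 ∨ s = 0 ∨ s = 1 := by omega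
  have hr1 : -2 ≤ r := by
    rcases ht with rfl | rfl | rfl <;> rcases hs with rfl | rfl | rfl <;> omega
  have hr2 : r ≤ 2 := by
    rcases ht with rfl | rfl | rfl <;> rcases hs with rfl | rfl | rfl <;> omega
  have key : c = 1 ∧ ((r = 0 ∧ s = 0 ∧ t ≠ 0) ∨ (r = 0 ∧ s ≠ 0 ∧ t = 0) ∨
      (r ≠ 0 ∧ s = 0 ∧ t = 0 ∧ (r = 1 ∨ r = -1))) := by
    subst hA
    rcases ht with rfl | rfl | rfl <;> rcases hs with rfl | rfl | rfl <;>
      interval_cases r <;> omega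
  obtain ⟨rfl, ⟨rfl, rfl, h0⟩ | ⟨rfl, h0, rfl⟩ | ⟨h0, rfl, rfl, hr⟩⟩ := key
  · rcases ht with rfl | rfl | rfl
    · exact ⟨z, x, -y, by linear_combination -h4⟩
    · exact absurd rfl h0
    · exact ⟨z, x, y, by linear_combination -h4⟩
  · rcases hs with rfl | rfl | rfl
    · exact ⟨y, x, -z, by linear_combination -h4⟩
    · exact absurd rfl h0
    · exact ⟨y, x, z, by linear_combination -h4⟩
  · rcases hr with rfl | rfl
    · exact ⟨x, y, z, by linear_combination -h4⟩
    · exact ⟨x, y, -z, by linear_combination -h4⟩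

lemma exists_PForm (n : ℕ) : ∃ a b c r s t : ℤ, PForm (120 * (n : ℤ) + 77) a b c r s t := by
  obtain ⟨p, hp, hpp, hmod⟩ := Nat.forall_exists_prime_gt_and_zmodEq (48 * (120 * n + 77))
    (q := 48 * (120 * n + 77)) (a := 4 * (120 * n + 77) - 3) (by omega) (by
      -- coprimality
      have h48 : IsCoprime (4 * (120 * (n : ℤ) + 77) - 3) 48 :=
        ⟨17, -(170 * n + 108), by ring⟩
      have hN : IsCoprime (4 * (120 * (n : ℤ) + 77) - 3) (120 * n + 77) :=
        ⟨-(40 * n + 26), 4 * (40 * n + 26) - 1, by ring⟩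
      push_cast
      exact h48.mul_right hN)
  obtain ⟨k, hk⟩ := hmod.symm.dvd
  push_cast at hk
  have hk0 : 0 ≤ k := by
    by_contra hneg
    have : k ≤ -1 := by omega
    have hp' : (48 * (120 * n + 77) : ℤ) < p := by exact_mod_cast hp
    nlinarith
  lift k to ℕ using hk0
  have hpe : (p : ℤ) = 4 * (120 * n + 77) * (12 * k + 1) - 3 := by linear_combination hk
  have hp4' : (p : ℤ) % 4 = 1 := by
    have : (p : ℤ) = 4 * ((120 * n + 77) * (12 * k + 1) - 1) + 1 := by linear_combination hpe
    omega
  have hp4 : p % 4 = 1 := by omega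
  have : Fact p.Prime := ⟨hpp⟩
  have hodd : Odd p := Nat.odd_iff.mpr (by omega)
  have hoe : Odd (12 * k + 1) := Nat.odd_iff.mpr (by omega)
  have hJ : jacobiSym (-((12 * k + 1 : ℕ) : ℤ)) p = 1 := by
    rw [neg_eq_neg_one_mul, jacobiSym.mul_left, jacobiSym.at_neg_one hodd,
      ZMod.χ₄_nat_one_mod_four hp4, one_mul,
      jacobiSym.quadratic_reciprocity_one_mod_four (by omega) hodd,
      jacobiSym.mod_left' (a₂ := -1 * (3 : ℕ)), jacobiSym.mul_left, jacobiSym.at_neg_one hoe,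
      ZMod.χ₄_nat_one_mod_four (by omega), one_mul,
      jacobiSym.quadratic_reciprocity_one_mod_four' (by decide) (by omega),
      jacobiSym.mod_left' (a₂ := 1), jacobiSym.one_left]
    · push_cast; omega
    · apply Int.emod_emod_of_dvd _ (dvd_refl _) |>.symm.trans
      apply Int.ModEq.eq
      apply Int.ModEq.trans (Int.mod_modEq _ _)
      apply Int.ModEq.symm
      apply (Int.modEq_iff_dvd).mpr
      refine ⟨4 * (120 * n + 77), ?_⟩
      push_cast
      linear_combination hpe
  obtain ⟨y, hy⟩ := ZMod.isSquare_of_jacobiSym_eq_one hJ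
  obtain ⟨τ, rfl⟩ := ZMod.intCast_surjective y
  have hdvd : (p : ℤ) ∣ τ ^ 2 + (12 * k + 1) := by
    rw [← ZMod.intCast_zmod_eq_zero_iff_dvd]
    push_cast at hy ⊢
    linear_combination -hy
  obtain ⟨a, ha⟩ := hdvd
  have hp0 : (0 : ℤ) < p := by exact_mod_cast hpp.pos
  refine ⟨a, p, 120 * n + 77, 0, 1, 2 * τ, ?_, ?_, ?_, 0, 0, 1, by ring⟩
  · have : (0 : ℤ) < p * a := by rw [← ha]; nlinarith [sq_nonneg τ, Int.natCast_nonneg k]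
    exact pos_of_mul_pos_right this hp0.le
  · have : 4 * a * p - (2 * τ) ^ 2 = 4 * (12 * k + 1) := by linear_combination -4 * ha
    rw [this]; omega
  · linear_combination -hpe - 4 * (120 * (n : ℤ) + 77) * ha

lemma rep_113 (N : ℤ) (h : ∃ u v w : ℤ, N = u ^ 2 + (v ^ 2 + v * w + w ^ 2)) :
    ∃ a b z : ℤ, N = a ^ 2 + b ^ 2 + 3 * z ^ 2 := by
  obtain ⟨u, v, w, h⟩ := h
  rcases Int.even_or_odd' v with ⟨k, rfl | rfl⟩
  · exact ⟨u, w + k, k, by linear_combination h⟩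
  · rcases Int.even_or_odd' w with ⟨l, rfl | rfl⟩
    · exact ⟨u, 2 * k + 1 + l, l, by linear_combination h⟩
    · exact ⟨u, k - l, k + l + 1, by linear_combination h⟩

lemma odd_of_even_aux (n a b z : ℤ) (h : 120 * n + 77 = a ^ 2 + (2 * b) ^ 2 + 3 * (2 * z) ^ 2)
    (ha : a % 2 = 1) : (b - z) % 2 = 1 := by
  obtain ⟨k, rfl⟩ : ∃ k, a = 2 * k + 1 := ⟨a / 2, by omega⟩
  obtain ⟨m, hm⟩ := Int.even_mul_succ_self k
  have h1 : 30 * n + 19 = 2 * m + b ^ 2 + 3 * z ^ 2 := by linarith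
  have hb : b ^ 2 % 2 = b % 2 := by
    rcases Int.even_or_odd' b with ⟨j, rfl | rfl⟩ <;> ring_nf <;> omega
  have hz : z ^ 2 % 2 = z % 2 := by
    rcases Int.even_or_odd' z with ⟨j, rfl | rfl⟩ <;> ring_nf <;> omega
  omega

lemma sq_mod_four (x : ℤ) : (x % 2 = 0 ∧ x ^ 2 % 4 = 0) ∨ (x % 2 = 1 ∧ x ^ 2 % 4 = 1) := by
  rcases Int.even_or_odd' x with ⟨j, rfl | rfl⟩ <;> ring_nf <;> omega

lemma rep_odd (n : ℤ) (h : ∃ a b z : ℤ, 120 * n + 77 = a ^ 2 + b ^ 2 + 3 * z ^ 2) :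
    ∃ a b z : ℤ, 120 * n + 77 = a ^ 2 + b ^ 2 + 3 * z ^ 2 ∧ a % 2 = 1 ∧ b % 2 = 1 ∧ z % 2 = 1 := by
  obtain ⟨a, b, z, h⟩ := h
  wlog hab : b % 2 = 0 ∨ a % 2 = 1 generalizing a b
  · exact this b a (by linarith) (by omega)
  have key : ∃ a b z : ℤ, 120 * n + 77 = a ^ 2 + b ^ 2 + 3 * z ^ 2 ∧ z % 2 = 1 := by
    by_cases hz : z % 2 = 1
    · exact ⟨a, b, z, h, hz⟩
    · have h1 := sq_mod_four a
      have h2 := sq_mod_four b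
      have h3 := sq_mod_four z
      obtain ⟨b', rfl⟩ : ∃ k, b = 2 * k := ⟨b / 2, by omega⟩
      obtain ⟨z', rfl⟩ : ∃ k, z = 2 * k := ⟨z / 2, by omega⟩
      exact ⟨a, b' + 3 * z', b' - z', by linear_combination h,
        odd_of_even_aux n a b' z' h (by omega)⟩
  obtain ⟨a, b, z, h, hz⟩ := key
  have h1 := sq_mod_four a
  have h2 := sq_mod_four b
  have h3 := sq_mod_four z
  exact ⟨a, b, z, h, by omega, by omega, hz⟩

lemma sq_mod_five (x : ℤ) : (x % 5 = 0 ∧ x ^ 2 % 5 = 0) ∨ ((x % 5 = 1 ∨ x % 5 = 4) ∧ x ^ 2 % 5 = 1)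
    ∨ ((x % 5 = 2 ∨ x % 5 = 3) ∧ x ^ 2 % 5 = 4) := by
  have : x % 5 = 0 ∨ x % 5 = 1 ∨ x % 5 = 2 ∨ x % 5 = 3 ∨ x % 5 = 4 := by omega
  rcases this with h | h | h | h | h <;> simp [pow_two, Int.mul_emod, h]

/-- One step of the 2-adic walk. -/
lemma step (N a b z : ℤ) (h : N = a ^ 2 + b ^ 2 + 3 * z ^ 2) (ha : a % 2 = 1) (hz : z % 2 = 1)
    (h5 : (a % 5 = 0 ∧ (z % 5 = 1 ∨ z % 5 = 4)) ∨ (z % 5 = 0 ∧ (a % 5 = 1 ∨ a % 5 = 4))) :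
    ∃ a b z : ℤ, N = a ^ 2 + b ^ 2 + 3 * z ^ 2 ∧ z % 2 = 1 ∧ (z % 5 = 2 ∨ z % 5 = 3) := by
  by_cases h4 : (a - z) % 4 = 2
  · obtain ⟨k, hk⟩ : ∃ k, a - z = 2 * k := ⟨(a - z) / 2, by omega⟩
    obtain rfl : a = z + 2 * k := by omega
    exact ⟨2 * z + k, b, k, by linear_combination h, by omega, by omega⟩
  · obtain ⟨k, hk⟩ : ∃ k, a + z = 2 * k := ⟨(a + z) / 2, by omega⟩
    obtain rfl : a = 2 * k - z := by omega
    exact ⟨k - 2 * z, b, k, by linear_combination h, by omega, by omega⟩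

lemma rep_good (n : ℤ) (h : ∃ a b z : ℤ, 120 * n + 77 = a ^ 2 + b ^ 2 + 3 * z ^ 2) :
    ∃ a b z : ℤ, 120 * n + 77 = a ^ 2 + b ^ 2 + 3 * z ^ 2 ∧ z % 2 = 1 ∧
      (z % 5 = 2 ∨ z % 5 = 3) := by
  obtain ⟨a, b, z, h, ha, hb, hz⟩ := rep_odd n h
  have h1 := sq_mod_five a
  have h2 := sq_mod_five b
  have h3 := sq_mod_five z
  by_cases hg : z % 5 = 2 ∨ z % 5 = 3
  · exact ⟨a, b, z, h, hz, hg⟩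
  · by_cases h5 : (a % 5 = 0 ∧ (z % 5 = 1 ∨ z % 5 = 4)) ∨ (z % 5 = 0 ∧ (a % 5 = 1 ∨ a % 5 = 4))
    · exact step _ a b z h ha hz h5
    · exact step _ b a z (by linarith) hb hz (by omega)

lemma five_split (a b M : ℤ) (h : a ^ 2 + b ^ 2 = 5 * M) : ∃ x y : ℤ, M = x ^ 2 + y ^ 2 := by
  have h1 := sq_mod_five a
  have h2 := sq_mod_five b
  by_cases hc : (a - 2 * b) % 5 = 0
  · obtain ⟨k, hk⟩ : ∃ k, a - 2 * b = 5 * k := ⟨(a - 2 * b) / 5, by omega⟩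
    obtain rfl : a = 2 * b + 5 * k := by omega
    exact ⟨b + 2 * k, k, by linarith⟩
  · obtain ⟨k, hk⟩ : ∃ k, a + 2 * b = 5 * k := ⟨(a + 2 * b) / 5, by omega⟩
    obtain rfl : a = 5 * k - 2 * b := by omega
    exact ⟨b - 2 * k, k, by linarith⟩

theorem rep_120n_add_77 (n : ℕ) :
    ∃ x y z : ℤ, Odd z ∧ 120 * (n : ℤ) + 77 = 5 * x ^ 2 + 5 * y ^ 2 + 3 * z ^ 2 := by
  obtain ⟨a, b, c, r, s, t, hP⟩ := exists_PForm n
  obtain ⟨a, b, z, h, hz, h5⟩ := rep_good n (rep_113 _ hP.reduce)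
  have h3 := sq_mod_five z
  obtain ⟨M, hM⟩ : ∃ M, a ^ 2 + b ^ 2 = 5 * M := ⟨(a ^ 2 + b ^ 2) / 5, by omega⟩
  obtain ⟨x, y, hxy⟩ := five_split a b M hM
  exact ⟨x, y, z, Int.odd_iff.mpr hz, by linear_combination h + hM + 5 * hxy⟩
end
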